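/- arXiv:1302.7095 — 3 statements merged into one kernel-verified Lean document; each statement's English description precedes it below -/
import Mathlib

section
/- Let A be a ring with identity, P• and P'• bounded complexes of finitely generated projective right A-modules, f• a chain endomorphism of P•, and f'• a chain endomorphism of P'•. Suppose there exist chain maps g• : P• → P'• and g'• : P'• → P• such that g'• ∘ g• is chain homotopic to the identity of P•, g• ∘ g'• is chain homotopic to the identity of P'•, and f'• ∘ g• is chain homotopic to g• ∘ f•. Then Σ_{i∈ℤ} (−1)^i tr_{P^i}(f^i) = Σ_{i∈ℤ} (−1)^i tr_{P'^i}(f'^i) in A/[A,A]. -/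
/-!
For a finitely generated projective `P` choose a finite dual basis `(x k, ξ k)`, so that
`p = ∑ k, x k · ξ k p`. Then `f ↦ ∑ k, f (x k) ⊗ ξ k` is a two-sided inverse of `φ_P`, whence
`tr_P f = ∑ k, ξ k (f (x k))` modulo commutators (`DualBasis.hsTr_eq`). From this formula the trace
is additive, and it is cyclic: `tr_P (b ∘ a) = tr_Q (a ∘ b)` for `a : P → Q` and `b : Q → P`
(`hsTr_comp_comm`), since both sides expand to the same double sum up to commutators.

For `h d + d h` with `h` a homotopy, cyclicity makes the alternating sum of traces telescope to
zero, so homotopic endomorphisms have the same alternating sum (`finsum_hsTr_eq_of_homotopy`).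
The theorem then follows from the chain
`f ≃ f g' g`, `tr (f g' g) = tr (g f g')`, `g f g' ≃ f' g g' ≃ f'`,
the homotopies being `f s` for `f g' g - f`, `u g'` for `f' g g' - g f g'` and `f' t` for
`f' g g' - f'`; note that `f` and `f'` have to commute with the differentials here.
-/

open MulOpposite TensorProduct

section HScore

variable (A : Type*) [Ring A]

/-- The additive subgroup `[A,A]` of `A` generated by all commutators `a*b - b*a`. -/
def commSub : AddSubgroup A :=
  AddSubgroup.closure {x : A | ∃ a b : A, x = a * b - b * a}

/-- `A/[A,A]`, which is isomorphic to the zeroth Hochschild homology of `A`. -/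
abbrev HH0 := A ⧸ commSub A

variable (P : Type*) [AddCommGroup P] [Module Aᵐᵒᵖ P]

/-- The endomorphism `p' ↦ p · f p'` of the right `A`-module `P`. -/
def hsEndo (p : P) (f : P →ₗ[Aᵐᵒᵖ] A) : P →ₗ[Aᵐᵒᵖ] P where
  toFun p' := op (f p') • p
  map_add' x y := by
    show op (f (x + y)) • p = op (f x) • p + op (f y) • p
    rw [map_add, MulOpposite.op_add, add_smul]
  map_smul' c x := by
    show op (f (c • x)) • p = c • (op (f x) • p)
    rw [map_smul, smul_smul]
    rfl

/-- The bilinear (over `ℤ`) map underlying `φ_P`. -/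
def hsPhiBil : P →ₗ[ℤ] (P →ₗ[Aᵐᵒᵖ] A) →ₗ[ℤ] (P →ₗ[Aᵐᵒᵖ] P) :=
  AddMonoidHom.toIntLinearMap <|
    AddMonoidHom.mk'
      (fun p => AddMonoidHom.toIntLinearMap <|
        AddMonoidHom.mk' (fun f => hsEndo A P p f)
          (fun f g => by
            ext x
            show op ((f + g) x) • p = op (f x) • p + op (g x) • p
            rw [LinearMap.add_apply, MulOpposite.op_add, add_smul]))
      (fun p q => by
        ext f x
        show op (f x) • (p + q) = op (f x) • p + op (f x) • q
        rw [smul_add])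

@[simp] lemma hsPhiBil_apply (p : P) (f : P →ₗ[Aᵐᵒᵖ] A) :
    hsPhiBil A P p f = hsEndo A P p f := rfl

/-- The balancing subgroup defining the tensor product `P ⊗_A Hom_A(P,A)`
of the right `A`-module `P` with the left `A`-module `Hom_A(P,A)`. -/
noncomputable def hsBal : AddSubgroup (P ⊗[ℤ] (P →ₗ[Aᵐᵒᵖ] A)) :=
  AddSubgroup.closure
    {x | ∃ (p : P) (a : A) (f : P →ₗ[Aᵐᵒᵖ] A),
      x = (op a • p) ⊗ₜ[ℤ] f - p ⊗ₜ[ℤ] (a • f)}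

/-- The tensor product `P ⊗_A Hom_A(P,A)` over the (possibly noncommutative) ring `A`. -/
abbrev HSTen := (P ⊗[ℤ] (P →ₗ[Aᵐᵒᵖ] A)) ⧸ hsBal A P

/-- `φ_P : P ⊗_A Hom_A(P,A) → End_A(P)`, `p ⊗ f ↦ (p' ↦ p · f p')`. -/
noncomputable def hsPhi : HSTen A P →+ (P →ₗ[Aᵐᵒᵖ] P) :=
  QuotientAddGroup.lift (hsBal A P) (TensorProduct.lift (hsPhiBil A P)).toAddMonoidHom
    (by
      have h : hsBal A P ≤ (TensorProduct.lift (hsPhiBil A P)).toAddMonoidHom.ker := by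
        rw [hsBal, AddSubgroup.closure_le]
        rintro y ⟨p, a, f, rfl⟩
        simp only [SetLike.mem_coe, AddMonoidHom.mem_ker, LinearMap.toAddMonoidHom_coe,
          map_sub, lift.tmul, hsPhiBil_apply, sub_eq_zero]
        ext z
        show op (f z) • (op a • p) = op ((a • f) z) • p
        rw [smul_smul, LinearMap.smul_apply, smul_eq_mul, ← MulOpposite.op_mul]
      intro x hx
      exact h hx)

/-- `ψ_P : P ⊗_A Hom_A(P,A) → A/[A,A]`, `p ⊗ f ↦ f(p) + [A,A]`. -/
noncomputable def hsPsiBil : P →ₗ[ℤ] (P →ₗ[Aᵐᵒᵖ] A) →ₗ[ℤ] HH0 A :=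
  AddMonoidHom.toIntLinearMap <|
    AddMonoidHom.mk'
      (fun p => AddMonoidHom.toIntLinearMap <|
        AddMonoidHom.mk' (fun f : P →ₗ[Aᵐᵒᵖ] A => (QuotientAddGroup.mk (f p) : HH0 A))
          (fun f g => by
            show (QuotientAddGroup.mk ((f + g) p) : HH0 A) = _
            rw [LinearMap.add_apply, QuotientAddGroup.mk_add]))
      (fun p q => by
        ext f
        show (QuotientAddGroup.mk (f (p + q)) : HH0 A) = QuotientAddGroup.mk (f p) + QuotientAddGroup.mk (f q)
        rw [map_add, QuotientAddGroup.mk_add])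

@[simp] lemma hsPsiBil_apply (p : P) (f : P →ₗ[Aᵐᵒᵖ] A) :
    hsPsiBil A P p f = (QuotientAddGroup.mk (f p) : HH0 A) := rfl

noncomputable def hsPsi : HSTen A P →+ HH0 A :=
  QuotientAddGroup.lift (hsBal A P) (TensorProduct.lift (hsPsiBil A P)).toAddMonoidHom
    (by
      have h : hsBal A P ≤ (TensorProduct.lift (hsPsiBil A P)).toAddMonoidHom.ker := by
        rw [hsBal, AddSubgroup.closure_le]
        rintro y ⟨p, a, f, rfl⟩
        simp only [SetLike.mem_coe, AddMonoidHom.mem_ker, LinearMap.toAddMonoidHom_coe,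
          map_sub, lift.tmul, hsPsiBil_apply, sub_eq_zero]
        rw [QuotientAddGroup.eq]
        refine AddSubgroup.subset_closure ⟨a, f p, ?_⟩
        rw [map_smul, LinearMap.smul_apply, smul_eq_mul]
        show -(f p * a) + a * f p = a * f p - f p * a
        abel
      intro x hx
      exact h hx)

instance : Nonempty (HSTen A P) := ⟨0⟩

/-- The Hattori–Stallings trace `tr_P = ψ_P ∘ φ_P⁻¹ : End_A(P) → A/[A,A]`. -/
noncomputable def hsTr (f : P →ₗ[Aᵐᵒᵖ] P) : HH0 A :=
  hsPsi A P (Function.invFun (hsPhi A P) f)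

end HScore

section Trace

variable {A : Type*} [Ring A]

/-- A finite dual basis of a right `A`-module: vectors `x k` and functionals `ξ k` such that
`p = ∑ k, x k · ξ k p` for every `p`. -/
def DualBasis {P : Type*} [AddCommGroup P] [Module Aᵐᵒᵖ P] {n : ℕ}
    (x : Fin n → P) (ξ : Fin n → (P →ₗ[Aᵐᵒᵖ] A)) : Prop :=
  ∀ p : P, ∑ k, op (ξ k p) • x k = p

variable {P : Type*} [AddCommGroup P] [Module Aᵐᵒᵖ P]
variable {Q : Type*} [AddCommGroup Q] [Module Aᵐᵒᵖ Q]

lemma exists_dualBasis [Module.Finite Aᵐᵒᵖ P] [Module.Projective Aᵐᵒᵖ P] :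
    ∃ (n : ℕ) (x : Fin n → P) (ξ : Fin n → (P →ₗ[Aᵐᵒᵖ] A)), DualBasis x ξ := by
  obtain ⟨n, π, σ, -, -, h⟩ := Module.Finite.exists_comp_eq_id_of_projective Aᵐᵒᵖ P
  refine ⟨n, fun k => π (Pi.single k 1), fun k =>
    { toFun := fun p => unop (σ p k)
      map_add' := fun p q => by simp
      map_smul' := fun c p => by simp [MulOpposite.smul_eq_mul_unop] }, fun p => ?_⟩
  have h1 : π (σ p) = p := LinearMap.congr_fun h p
  conv_rhs => rw [← h1, pi_eq_sum_univ' (σ p), map_sum]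
  refine Finset.sum_congr rfl fun k _ => ?_
  rw [map_smul]
  simp only [LinearMap.coe_mk, AddHom.coe_mk, op_unop]

lemma HH0.mk_mul_comm (a b : A) :
    (QuotientAddGroup.mk (a * b) : HH0 A) = QuotientAddGroup.mk (b * a) := by
  rw [QuotientAddGroup.eq]
  refine AddSubgroup.subset_closure ⟨b, a, ?_⟩
  abel

lemma hsTen_smul_tmul (p : P) (a : A) (f : P →ₗ[Aᵐᵒᵖ] A) :
    (QuotientAddGroup.mk ((op a • p) ⊗ₜ[ℤ] f) : HSTen A P) =
      QuotientAddGroup.mk (p ⊗ₜ[ℤ] (a • f)) := by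
  rw [← sub_eq_zero, ← QuotientAddGroup.mk_sub, QuotientAddGroup.eq_zero_iff]
  exact AddSubgroup.subset_closure ⟨p, a, f, rfl⟩

/-- The inverse of `φ_P` attached to a dual basis: `f ↦ ∑ k, f (x k) ⊗ ξ k`. -/
noncomputable def hsPhiInv {n : ℕ} (x : Fin n → P) (ξ : Fin n → (P →ₗ[Aᵐᵒᵖ] A)) :
    (P →ₗ[Aᵐᵒᵖ] P) →+ HSTen A P where
  toFun f := ∑ k, QuotientAddGroup.mk ((f (x k)) ⊗ₜ[ℤ] ξ k)
  map_zero' := by simp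
  map_add' f g := by
    simp [TensorProduct.add_tmul, Finset.sum_add_distrib]

lemma DualBasis.hsPhiInv_hsPhi {n : ℕ} {x : Fin n → P} {ξ : Fin n → (P →ₗ[Aᵐᵒᵖ] A)}
    (h : DualBasis x ξ) (z : HSTen A P) : hsPhiInv x ξ (hsPhi A P z) = z := by
  obtain ⟨z, rfl⟩ := QuotientAddGroup.mk_surjective z
  induction z with
  | zero => simp
  | add a b ha hb => rw [QuotientAddGroup.mk_add, map_add, map_add, ha, hb]
  | tmul p f =>
    have hf : ∑ k, f (x k) • ξ k = f := by
      ext q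
      conv_rhs => rw [← h q, map_sum]
      simp
    have h1 : hsPhiInv x ξ (hsPhi A P (QuotientAddGroup.mk (p ⊗ₜ[ℤ] f))) =
        ∑ k, (QuotientAddGroup.mk ((op (f (x k)) • p) ⊗ₜ[ℤ] ξ k) : HSTen A P) := rfl
    rw [h1]
    simp_rw [hsTen_smul_tmul]
    conv_rhs => rw [← hf, TensorProduct.tmul_sum]
    exact (map_sum (QuotientAddGroup.mk' (hsBal A P)) _ _).symm

lemma DualBasis.hsPhi_hsPhiInv {n : ℕ} {x : Fin n → P} {ξ : Fin n → (P →ₗ[Aᵐᵒᵖ] A)}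
    (h : DualBasis x ξ) (f : P →ₗ[Aᵐᵒᵖ] P) : hsPhi A P (hsPhiInv x ξ f) = f := by
  have h1 : hsPhi A P (hsPhiInv x ξ f) = ∑ k, hsEndo A P (f (x k)) (ξ k) :=
    map_sum (hsPhi A P) (fun k => QuotientAddGroup.mk (f (x k) ⊗ₜ[ℤ] ξ k)) Finset.univ
  rw [h1]
  ext q
  conv_rhs => rw [← h q, map_sum]
  rw [LinearMap.sum_apply]
  exact Finset.sum_congr rfl fun k _ => (map_smul f _ _).symm

/-- The trace in terms of a dual basis; in particular the right-hand side does not depend on the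
dual basis. -/
lemma DualBasis.hsTr_eq {n : ℕ} {x : Fin n → P} {ξ : Fin n → (P →ₗ[Aᵐᵒᵖ] A)}
    (h : DualBasis x ξ) (f : P →ₗ[Aᵐᵒᵖ] P) :
    hsTr A P f = ∑ k, (QuotientAddGroup.mk (ξ k (f (x k))) : HH0 A) := by
  have h1 : Function.invFun (hsPhi A P) f = hsPhiInv x ξ f := by
    have hinj : Function.Injective (hsPhi A P) :=
      Function.LeftInverse.injective h.hsPhiInv_hsPhi
    apply hinj
    rw [h.hsPhi_hsPhiInv, Function.invFun_eq ⟨_, h.hsPhi_hsPhiInv f⟩]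
  rw [hsTr, h1]
  exact map_sum (hsPsi A P) (fun k => QuotientAddGroup.mk (f (x k) ⊗ₜ[ℤ] ξ k)) Finset.univ

lemma hsTr_add [Module.Finite Aᵐᵒᵖ P] [Module.Projective Aᵐᵒᵖ P] (f g : P →ₗ[Aᵐᵒᵖ] P) :
    hsTr A P (f + g) = hsTr A P f + hsTr A P g := by
  obtain ⟨n, x, ξ, h⟩ := exists_dualBasis (A := A) (P := P)
  simp [h.hsTr_eq, Finset.sum_add_distrib]

lemma hsTr_comp_comm [Module.Finite Aᵐᵒᵖ P] [Module.Projective Aᵐᵒᵖ P]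
    [Module.Finite Aᵐᵒᵖ Q] [Module.Projective Aᵐᵒᵖ Q]
    (a : P →ₗ[Aᵐᵒᵖ] Q) (b : Q →ₗ[Aᵐᵒᵖ] P) :
    hsTr A P (b ∘ₗ a) = hsTr A Q (a ∘ₗ b) := by
  obtain ⟨n, x, ξ, h⟩ := exists_dualBasis (A := A) (P := P)
  obtain ⟨m, y, η, h'⟩ := exists_dualBasis (A := A) (P := Q)
  rw [h.hsTr_eq, h'.hsTr_eq]
  have e1 (k : Fin n) : (QuotientAddGroup.mk (ξ k ((b ∘ₗ a) (x k))) : HH0 A) =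
      ∑ l, QuotientAddGroup.mk (ξ k (b (y l)) * η l (a (x k))) := by
    conv_lhs => rw [LinearMap.comp_apply, ← h' (a (x k))]
    simp only [map_sum, map_smul, op_smul_eq_mul]
    exact map_sum (QuotientAddGroup.mk' (commSub A)) _ _
  have e2 (l : Fin m) : (QuotientAddGroup.mk (η l ((a ∘ₗ b) (y l))) : HH0 A) =
      ∑ k, QuotientAddGroup.mk (η l (a (x k)) * ξ k (b (y l))) := by
    conv_lhs => rw [LinearMap.comp_apply, ← h (b (y l))]
    simp only [map_sum, map_smul, op_smul_eq_mul]
    exact map_sum (QuotientAddGroup.mk' (commSub A)) _ _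
  simp_rw [e1, e2]
  rw [Finset.sum_comm]
  exact Finset.sum_congr rfl fun l _ => Finset.sum_congr rfl fun k _ => HH0.mk_mul_comm _ _

lemma hsTr_of_subsingleton [Module.Finite Aᵐᵒᵖ P] [Module.Projective Aᵐᵒᵖ P]
    [Subsingleton P] (f : P →ₗ[Aᵐᵒᵖ] P) : hsTr A P f = 0 := by
  have h := hsTr_add f f
  rwa [Subsingleton.elim (f + f) f, left_eq_add] at h

end Trace

section Complex

variable {A : Type*} [Ring A] {P : ℤ → Type*}
  [∀ i, AddCommGroup (P i)] [∀ i, Module Aᵐᵒᵖ (P i)]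
  [∀ i, Module.Finite Aᵐᵒᵖ (P i)] [∀ i, Module.Projective Aᵐᵒᵖ (P i)]

lemma finite_support_hsTr (hbdd : ∃ N : ℤ, ∀ i : ℤ, N ≤ |i| → Subsingleton (P i))
    (F : ∀ i, P i →ₗ[Aᵐᵒᵖ] P i) :
    (Function.support fun i : ℤ => (Int.negOnePow i : ℤ) • hsTr A (P i) (F i)).Finite := by
  obtain ⟨N, hN⟩ := hbdd
  refine (Set.finite_Icc (-N) N).subset fun i hi => ?_
  rw [Set.mem_Icc, ← abs_le]
  by_contra! hlt
  have := hN i hlt.le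
  exact hi (by simp [hsTr_of_subsingleton])

/-- Chain homotopic endomorphisms of a bounded complex have the same alternating sum of traces.
The maps `F` and `G` need not be compatible with `d`. -/
lemma finsum_hsTr_eq_of_homotopy (hbdd : ∃ N : ℤ, ∀ i : ℤ, N ≤ |i| → Subsingleton (P i))
    (d : ∀ i : ℤ, P i →ₗ[Aᵐᵒᵖ] P (i + 1)) (F G : ∀ i, P i →ₗ[Aᵐᵒᵖ] P i)
    (h : ∀ i : ℤ, P (i + 1) →ₗ[Aᵐᵒᵖ] P i)
    (hFG : ∀ i : ℤ, F (i + 1) = G (i + 1) + (h (i + 1) ∘ₗ d (i + 1) + d i ∘ₗ h i)) :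
    ∑ᶠ i : ℤ, ((Int.negOnePow i : ℤ) • hsTr A (P i) (F i)) =
      ∑ᶠ i : ℤ, ((Int.negOnePow i : ℤ) • hsTr A (P i) (G i)) := by
  let c : ℤ → HH0 A := fun i => (Int.negOnePow i : ℤ) • hsTr A (P i) (h i ∘ₗ d i)
  have hc : (Function.support c).Finite := finite_support_hsTr hbdd _
  have hG := finite_support_hsTr hbdd G
  have shift (e : ℤ → HH0 A) : ∑ᶠ i, e (i + 1) = ∑ᶠ i, e i :=
    finsum_comp_equiv (Equiv.addRight (1 : ℤ))
  have fin_shift {e : ℤ → HH0 A} (he : (Function.support e).Finite) :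
      (Function.support fun i => e (i + 1)).Finite :=
    he.preimage (f := fun i : ℤ => i + 1) (add_left_injective 1).injOn
  have key (i : ℤ) : (Int.negOnePow (i + 1) : ℤ) • hsTr A (P (i + 1)) (F (i + 1)) =
      (Int.negOnePow (i + 1) : ℤ) • hsTr A (P (i + 1)) (G (i + 1)) + (c (i + 1) - c i) := by
    simp only [c]
    rw [hFG, hsTr_add, hsTr_add, hsTr_comp_comm (h i) (d i), zsmul_add, zsmul_add,
      Int.negOnePow_succ, Units.val_neg, neg_zsmul _ (Int.negOnePow i : ℤ),
      neg_zsmul _ (Int.negOnePow i : ℤ), neg_zsmul _ (Int.negOnePow i : ℤ), sub_eq_add_neg]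
  rw [← shift fun i => (Int.negOnePow i : ℤ) • hsTr A (P i) (F i),
    ← shift fun i => (Int.negOnePow i : ℤ) • hsTr A (P i) (G i)]
  simp_rw [key]
  rw [finsum_add_distrib (fin_shift hG), finsum_sub_distrib (fin_shift hc) hc, shift c, sub_self,
    add_zero]
  exact ((fin_shift hc).union hc).subset (Function.support_sub _ _)

end Complex

/-- Let `P•`, `P'•` be bounded complexes of finitely generated projective right
`A`-modules, `f•` a chain endomorphism of `P•` and `f'•` a chain endomorphism of `P'•`. If there
are chain maps `g• : P• → P'•` and `g'• : P'• → P•` with `g'• ∘ g•` homotopic to `id_{P•}`,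
`g• ∘ g'•` homotopic to `id_{P'•}` and `f'• ∘ g•` homotopic to `g• ∘ f•`, then
`Σᵢ (−1)ⁱ tr_{Pⁱ}(fⁱ) = Σᵢ (−1)ⁱ tr_{P'ⁱ}(f'ⁱ)` in `A/[A,A]`. -/
theorem hsTr_homotopy_equiv (A : Type*) [Ring A] (P P' : ℤ → Type*)
    [∀ i, AddCommGroup (P i)] [∀ i, Module Aᵐᵒᵖ (P i)]
    [∀ i, Module.Finite Aᵐᵒᵖ (P i)] [∀ i, Module.Projective Aᵐᵒᵖ (P i)]
    [∀ i, AddCommGroup (P' i)] [∀ i, Module Aᵐᵒᵖ (P' i)]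
    [∀ i, Module.Finite Aᵐᵒᵖ (P' i)] [∀ i, Module.Projective Aᵐᵒᵖ (P' i)]
    (hbdd : ∃ N : ℤ, ∀ i : ℤ, N ≤ |i| → Subsingleton (P i))
    (hbdd' : ∃ N : ℤ, ∀ i : ℤ, N ≤ |i| → Subsingleton (P' i))
    (d : ∀ i : ℤ, P i →ₗ[Aᵐᵒᵖ] P (i + 1)) (hd : ∀ i : ℤ, d (i + 1) ∘ₗ d i = 0)
    (d' : ∀ i : ℤ, P' i →ₗ[Aᵐᵒᵖ] P' (i + 1)) (hd' : ∀ i : ℤ, d' (i + 1) ∘ₗ d' i = 0)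
    (f : ∀ i : ℤ, P i →ₗ[Aᵐᵒᵖ] P i) (hf : ∀ i : ℤ, d i ∘ₗ f i = f (i + 1) ∘ₗ d i)
    (f' : ∀ i : ℤ, P' i →ₗ[Aᵐᵒᵖ] P' i) (hf' : ∀ i : ℤ, d' i ∘ₗ f' i = f' (i + 1) ∘ₗ d' i)
    (g : ∀ i : ℤ, P i →ₗ[Aᵐᵒᵖ] P' i) (hg : ∀ i : ℤ, d' i ∘ₗ g i = g (i + 1) ∘ₗ d i)
    (g' : ∀ i : ℤ, P' i →ₗ[Aᵐᵒᵖ] P i) (hg' : ∀ i : ℤ, d i ∘ₗ g' i = g' (i + 1) ∘ₗ d' i)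
    (s : ∀ i : ℤ, P (i + 1) →ₗ[Aᵐᵒᵖ] P i)
    (hs : ∀ i : ℤ, g' (i + 1) ∘ₗ g (i + 1) - LinearMap.id = s (i + 1) ∘ₗ d (i + 1) + d i ∘ₗ s i)
    (t : ∀ i : ℤ, P' (i + 1) →ₗ[Aᵐᵒᵖ] P' i)
    (ht : ∀ i : ℤ, g (i + 1) ∘ₗ g' (i + 1) - LinearMap.id = t (i + 1) ∘ₗ d' (i + 1) + d' i ∘ₗ t i)
    (u : ∀ i : ℤ, P (i + 1) →ₗ[Aᵐᵒᵖ] P' i)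
    (hu : ∀ i : ℤ, f' (i + 1) ∘ₗ g (i + 1) - g (i + 1) ∘ₗ f (i + 1) =
      u (i + 1) ∘ₗ d (i + 1) + d' i ∘ₗ u i) :
    ∑ᶠ i : ℤ, ((Int.negOnePow i : ℤ) • hsTr A (P i) (f i)) =
      ∑ᶠ i : ℤ, ((Int.negOnePow i : ℤ) • hsTr A (P' i) (f' i)) := by
  have e1 : ∑ᶠ i : ℤ, ((Int.negOnePow i : ℤ) • hsTr A (P i) ((f i ∘ₗ g' i) ∘ₗ g i)) =
      ∑ᶠ i : ℤ, ((Int.negOnePow i : ℤ) • hsTr A (P i) (f i)) := by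
    refine finsum_hsTr_eq_of_homotopy hbdd d _ _ (fun i => f i ∘ₗ s i) fun i => ?_
    have h1 := hs i
    rw [sub_eq_iff_eq_add'] at h1
    rw [LinearMap.comp_assoc, h1, LinearMap.comp_add, LinearMap.comp_add, LinearMap.comp_id,
      ← LinearMap.comp_assoc (s i), ← hf]
    simp only [LinearMap.comp_assoc]
  have e2 : ∑ᶠ i : ℤ, ((Int.negOnePow i : ℤ) • hsTr A (P' i) (f' i ∘ₗ g i ∘ₗ g' i)) =
      ∑ᶠ i : ℤ, ((Int.negOnePow i : ℤ) • hsTr A (P' i) (f' i)) := by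
    refine finsum_hsTr_eq_of_homotopy hbdd' d' _ _ (fun i => f' i ∘ₗ t i) fun i => ?_
    have h1 := ht i
    rw [sub_eq_iff_eq_add'] at h1
    rw [h1, LinearMap.comp_add, LinearMap.comp_add, LinearMap.comp_id,
      ← LinearMap.comp_assoc (t i), ← hf']
    simp only [LinearMap.comp_assoc]
  have e3 : ∑ᶠ i : ℤ, ((Int.negOnePow i : ℤ) • hsTr A (P' i) (f' i ∘ₗ g i ∘ₗ g' i)) =
      ∑ᶠ i : ℤ, ((Int.negOnePow i : ℤ) • hsTr A (P' i) (g i ∘ₗ f i ∘ₗ g' i)) := by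
    refine finsum_hsTr_eq_of_homotopy hbdd' d' _ _ (fun i => u i ∘ₗ g' (i + 1)) fun i => ?_
    have h1 := hu i
    rw [sub_eq_iff_eq_add'] at h1
    rw [← LinearMap.comp_assoc, h1, LinearMap.add_comp, LinearMap.add_comp,
      LinearMap.comp_assoc (g' (i + 1)) (d (i + 1)), hg']
    simp only [LinearMap.comp_assoc]
  rw [← e1, ← e2, e3]
  exact finsum_congr fun i => by rw [hsTr_comp_comm (g i) (f i ∘ₗ g' i)]
end

section
/- Let k be a field, A a finite-dimensional elementary k-algebra with Jacobson radical J, e a primitive idempotent of A, S = Ae/Je the corresponding simple left A-module, and Ā := A/A(1−e)A. Then pd_A S = pd_{A ⊗_k Ā^op} Ā, where Ā is regarded as a left module over A ⊗_k Ā^op via its natural A-Ā-bimodule structure. -/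
/-!
Write `Ā = A/A(1-e)A` and `R = A ⊗ₖ Āᵒᵖ`.  Since `A` is elementary and `e` is primitive, `e` maps to
one of the coordinate idempotents of `A/J ≅ kⁿ` (`exists_eq_single`); the corresponding character
`χ : A → k` factors through `ε : Ā → k`, whose kernel is the image of `J` and hence is nilpotent.
Thus `π(a ⊗ b) = a ε(b)` is a surjection `R → A`, split by `a ↦ a ⊗ 1`.

For an `A`-`Ā`-bimodule `K` put `Red K = K/(ker π)K = K/K·rad Ā`, the base change of `K` along `π`.
On bimodules that are projective as right `Ā`-modules this functor has two properties:

* it is exact on short exact sequences `0 → L → P → K → 0` with such a `K`, because these split over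
  `Ā` (`Red.map_injective`, `Red.map_exact`, `Red.map_surjective`);
* it preserves and reflects projectivity (`projective_red_iff`).  For the reflection take `P`
  projective in the sequence above; a retraction `Red P → Red L` lifts to an `R`-linear map `P → L`,
  whose restriction to `L` is the identity modulo the nilpotent radical of `Ā`, hence invertible.
  So the original sequence splits.

As `R` is itself `Ā`-projective, induction along syzygies shows that `K` and `Red K` have the same
projective dimension (`hasPD_red_iff`).  Apply this to `K = Ā`, which is free of rank one over `Ā`:
`Red Ā = A/ker χ ≅ Ae/Je = S` (`red_self`).  Finally `projDim` is defined by resolutions, while the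
induction uses the vanishing of `Ext`; `projDim_le_iff` compares the two.
-/

open CategoryTheory TensorProduct

universe u v

noncomputable section

/-- The projective dimension of a module, as an element of `ℕ∞`: the least `m : ℕ` such that
`M` admits a projective resolution vanishing in degrees `> m` (and `⊤` if there is no such
bounded resolution). -/
def projDim (R : Type u) [Ring R] (M : Type u) [AddCommGroup M] [Module R M] : ℕ∞ :=
  sInf {n : ℕ∞ | ∃ m : ℕ, n = (m : ℕ∞) ∧
    ∃ res : ProjectiveResolution (ModuleCat.of R M),
      ∀ i : ℕ, m < i → Limits.IsZero (res.complex.X i)}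

/-- A finite-dimensional algebra `A` over a field `k` is *elementary* if `A/J ≅ kⁿ` as
`k`-algebras, where `J` is the Jacobson radical of `A`; equivalently, there is a surjective
`k`-algebra map `A → kⁿ` whose kernel is the Jacobson radical. -/
def IsElementary (k : Type v) (A : Type u) [Field k] [Ring A] [Algebra k A] : Prop :=
  ∃ (n : ℕ) (φ : A →ₐ[k] (Fin n → k)), Function.Surjective φ ∧
    RingHom.ker (φ : A →+* (Fin n → k)) = (⊥ : Ideal A).jacobson

/-- An idempotent `e` of a ring `A` is *primitive* if `e ≠ 0` and `e` is not the
sum of two nonzero orthogonal idempotents. -/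
def IsPrimitiveIdempotent (A : Type u) [Ring A] (e : A) : Prop :=
  IsIdempotentElem e ∧ e ≠ 0 ∧
    ∀ f g : A, IsIdempotentElem f → IsIdempotentElem g → f * g = 0 → g * f = 0 →
      e = f + g → f = 0 ∨ g = 0

variable (A : Type u) [Ring A] (e : A)

/-- `Ā = A/A(1-e)A`, the quotient of `A` by the two-sided ideal generated by `1 - e`. -/
abbrev CornerQuot := (TwoSidedIdeal.span {1 - e} : TwoSidedIdeal A).ringCon.Quotient

/-- The canonical projection `A → Ā = A/A(1-e)A`. -/
abbrev cornerQuotMk : A →+* CornerQuot A e :=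
  RingCon.mk' (TwoSidedIdeal.span {1 - e} : TwoSidedIdeal A).ringCon

/-- The simple left `A`-module `S = Ae/Je` attached to a primitive idempotent `e`,
where `J` is the Jacobson radical. -/
def CornerSimple :=
  ↥(LinearMap.range (LinearMap.toSpanSingleton A A e)) ⧸
    (Submodule.comap (LinearMap.range (LinearMap.toSpanSingleton A A e)).subtype
      (Submodule.map (LinearMap.toSpanSingleton A A e) ((⊥ : Ideal A).jacobson)))

instance : AddCommGroup (CornerSimple A e) := by unfold CornerSimple; infer_instance
instance : Module A (CornerSimple A e) := by unfold CornerSimple; infer_instance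

end

open CategoryTheory Limits

/-! ### Projective dimension through resolutions and through `Ext` -/

theorem hasPD_of_resolution {C : Type*} [Category C] [Abelian C] {X : C} (m : ℕ)
    (res : ProjectiveResolution X) (h : ∀ i : ℕ, m < i → IsZero (res.complex.X i)) :
    HasProjectiveDimensionLT X (m + 1) := by
  let := HasExt.standard C
  refine HasProjectiveDimensionLT.mk ?_
  intro i hi Y α
  obtain ⟨f, hf, rfl⟩ := res.extMk_surjective α (i+1) rfl
  obtain rfl : f = 0 := (h i (by omega)).eq_of_src _ _
  exact res.extMk_zero _ _

/-- Splicing a resolution of the first term of a short exact sequence with projective middle term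
into a resolution of the third term, one step longer. -/
theorem exists_resolution_step {C : Type*} [Category C] [Abelian C] (S : ShortComplex C)
    (hS : S.ShortExact) [Projective S.X₂] (m : ℕ) (res : ProjectiveResolution S.X₁)
    (h : ∀ i : ℕ, m < i → IsZero (res.complex.X i)) :
    ∃ res : ProjectiveResolution S.X₃, ∀ i : ℕ, m + 1 < i → IsZero (res.complex.X i) := by
  have := hS.mono_f
  have := hS.epi_g
  -- The degree-zero part `p` of the augmentation is restated with plain target `S.X₁`: in `res.π` the
  -- target is the degree-zero term of a complex concentrated in one degree.
  obtain ⟨p, hp0, hpe, hp⟩ : ∃ (p : res.complex.X 0 ⟶ S.X₁) (w : res.complex.d 1 0 ≫ p = 0)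
      (_ : Epi p), (ShortComplex.mk _ _ w).Exact :=
    ⟨res.π.f 0, res.complex_d_comp_π_f_zero, inferInstanceAs (Epi (res.π.f 0)), res.exact₀⟩
  have w : res.complex.d 1 0 ≫ p ≫ S.f = 0 := by rw [← Category.assoc, hp0, zero_comp]
  let K := ChainComplex.augment res.complex (p ≫ S.f) w
  have wg : (p ≫ S.f) ≫ S.g = 0 := by simp
  have ex0 : (ShortComplex.mk _ _ wg).Exact := by
    let α : ShortComplex.mk _ _ wg ⟶ S := { τ₁ := p, τ₂ := 𝟙 _, τ₃ := 𝟙 _ }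
    have : Epi α.τ₁ := hpe
    have : IsIso α.τ₂ := inferInstanceAs (IsIso (𝟙 _))
    have : Mono α.τ₃ := inferInstanceAs (Mono (𝟙 _))
    exact (ShortComplex.exact_iff_of_epi_of_isIso_of_mono α).2 hS.exact
  have ex1 : (ShortComplex.mk _ _ w).Exact := by
    let α : ShortComplex.mk _ _ hp0 ⟶ ShortComplex.mk _ _ w := { τ₁ := 𝟙 _, τ₂ := 𝟙 _, τ₃ := S.f }
    have : Epi α.τ₁ := inferInstanceAs (Epi (𝟙 _))
    have : IsIso α.τ₂ := inferInstanceAs (IsIso (𝟙 _))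
    have : Mono α.τ₃ := hS.mono_f
    exact (ShortComplex.exact_iff_of_epi_of_isIso_of_mono α).1 hp
  have hg0 : 𝟙 S.X₂ ≫ S.g = ((K.toSingle₀Equiv S.X₃).symm ⟨S.g, wg⟩).f 0 ≫ 𝟙 _ := by
    rw [Category.id_comp, Category.comp_id]
    exact (ChainComplex.toSingle₀Equiv_symm_apply_f_zero (C := K) S.g wg).symm
  refine ⟨{ complex := K
            projective := ?_
            π := (ChainComplex.toSingle₀Equiv _ _).symm ⟨S.g, wg⟩
            quasiIso := ⟨?_⟩ }, ?_⟩
  · rintro (_ | n)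
    · exact ‹Projective S.X₂›
    · exact res.projective n
  · rintro (_ | n)
    · rw [ChainComplex.quasiIsoAt₀_iff, ShortComplex.quasiIso_iff_of_zeros']
      · refine (ShortComplex.exact_and_epi_g_iff_of_iso ?_).2 ⟨ex0, hS.epi_g⟩
        exact ShortComplex.isoMk (Iso.refl _) (Iso.refl _) (Iso.refl _)
          ((Category.id_comp _).trans (Category.comp_id (p ≫ S.f)).symm)
          hg0
      all_goals rfl
    · rw [quasiIsoAt_iff_exactAt']
      · rw [HomologicalComplex.exactAt_iff' _ (n+2) (n+1) n (by simp) (by simp)]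
        rcases n with _ | n
        · exact ex1
        · exact res.exact_succ n
      · exact ChainComplex.exactAt_succ_single_obj _ _
  · rintro (_ | i) hi
    · omega
    · exact h i (by omega)

/-- The resolution-theoretic `projDim` agrees with the `Ext`-theoretic notion of Mathlib. -/
theorem projDim_le_iff (R : Type u) [Ring R] (M : Type u) [AddCommGroup M] [Module R M] (m : ℕ) :
    projDim R M ≤ m ↔ HasProjectiveDimensionLT (ModuleCat.of R M) (m + 1) := by
  have key : ∀ (n : ℕ) (M : ModuleCat.{u} R), HasProjectiveDimensionLT M (n + 1) →
      ∃ res : ProjectiveResolution M, ∀ i : ℕ, n < i → IsZero (res.complex.X i) := by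
    intro n
    induction n with
    | zero =>
      intro M h
      rw [zero_add, ← projective_iff_hasProjectiveDimensionLT_one] at h
      exact ⟨ProjectiveResolution.self M, fun i hi => by
        apply HomologicalComplex.isZero_single_obj_X
        simpa using Nat.pos_iff_ne_zero.mp hi⟩
    | succ n ih =>
      intro M h
      have hS := M.shortExact_projectiveShortComplex
      obtain ⟨res, hres⟩ := ih _ ((hS.hasProjectiveDimensionLT_X₃_iff n inferInstance).mp h)
      exact exists_resolution_step _ hS n res hres
  constructor
  · intro h
    have hlt : projDim R M < ((m + 1 : ℕ) : ℕ∞) :=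
      lt_of_le_of_lt h (by exact_mod_cast Nat.lt_succ_self m)
    obtain ⟨_, ⟨m', rfl, res, hres⟩, hlt'⟩ := sInf_lt_iff.mp hlt
    have : m' < m + 1 := by exact_mod_cast hlt'
    exact hasPD_of_resolution m res fun i hi => hres i (by omega)
  · intro h
    obtain ⟨res, hres⟩ := key m _ h
    exact sInf_le ⟨m, rfl, res, hres⟩

/-! ### Reduction of modules along a split surjection with nilpotent kernel -/

section Reduction

variable {A B R : Type u} [Ring A] [Ring B] [Ring R]

/-- The submodule `(ker π) K` of `K`. -/
def redSub (π : R →+* A) (K : Type u) [AddCommGroup K] [Module R K] : Submodule R K :=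
  Submodule.span R {y | ∃ (r : R) (x : K), π r = 0 ∧ y = r • x}

/-- The reduction `K/(ker π)K` of an `R`-module `K`, regarded as an `A`-module by restriction of
scalars along `j`.  When `j` is a section of `π`, this is the base change of `K` along `π`; the
type carries `j` so that the `A`-module structure can be an instance. -/
def Red (π : R →+* A) (_j : A →+* R) (K : Type u) [AddCommGroup K] [Module R K] : Type u :=
  K ⧸ redSub π K

variable (π : R →+* A) (j : A →+* R) (i : B →+* R)

instance (K : Type u) [AddCommGroup K] [Module R K] : AddCommGroup (Red π j K) :=
  inferInstanceAs (AddCommGroup (K ⧸ redSub π K))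

instance (K : Type u) [AddCommGroup K] [Module R K] : Module A (Red π j K) :=
  Module.compHom (K ⧸ redSub π K) j

/-- The quotient map `K → Red K`. -/
def Red.mk (K : Type u) [AddCommGroup K] [Module R K] : K →+ Red π j K :=
  (redSub π K).mkQ.toAddMonoidHom

/-- `K` is projective over `B`, by restriction of scalars along `i : B → R`.  The `B`-action is not
an instance, so that it cannot conflict with the `R`-action. -/
def BProjective (K : Type u) [AddCommGroup K] [Module R K] : Prop :=
  @Module.Projective B _ K _ (Module.compHom K i)

/-- The situation of the theorem with `R = A ⊗ₖ Āᵒᵖ` and `B = Āᵒᵖ`, in ring-theoretic terms: `j` is a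
section of `π`, the kernel of `π` is generated by `i (I)` as a right ideal, where `I = ker (π ∘ i)`,
the ideal `I` is nilpotent, and `R` is projective over `B`.

Nilpotency is stated through sets `T m` containing all products of `m` elements of `I`. -/
structure Augmented : Prop where
  section_eq : ∀ a, π (j a) = a
  ker_le : ∀ r, π r = 0 →
    r ∈ AddSubgroup.closure {x | ∃ (b : B) (s : R), π (i b) = 0 ∧ x = i b * s}
  nilpotent : ∃ (T : ℕ → Set B) (N : ℕ), 1 ∈ T 0 ∧
    (∀ m b c, b ∈ T m → π (i c) = 0 → b * c ∈ T (m + 1)) ∧ ∀ b ∈ T N, b = 0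
  projective : BProjective i R

variable {π j i}
variable {K P L : Type u} [AddCommGroup K] [Module R K] [AddCommGroup P] [Module R P]
  [AddCommGroup L] [Module R L]

theorem Red.mk_surjective : Function.Surjective (Red.mk π j K) :=
  (redSub π K).mkQ_surjective

theorem Red.mk_eq_zero {x : K} : Red.mk π j K x = 0 ↔ x ∈ redSub π K :=
  Submodule.Quotient.mk_eq_zero _

theorem Red.smul_mk (a : A) (x : K) : a • Red.mk π j K x = Red.mk π j K (j a • x) := rfl

theorem smul_mem_redSub {r : R} (hr : π r = 0) (x : K) : r • x ∈ redSub π K :=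
  Submodule.subset_span ⟨r, x, hr, rfl⟩

theorem redSub_le {N : Submodule R K} (h : ∀ r, π r = 0 → ∀ x : K, r • x ∈ N) :
    redSub π K ≤ N := by
  refine Submodule.span_le.2 ?_
  rintro _ ⟨r, x, hr, rfl⟩
  exact h r hr x

/-- On the reduction the ring `R` acts through `π`. -/
theorem Red.mk_smul (H : Augmented π j i) (r : R) (x : K) :
    Red.mk π j K (r • x) = π r • Red.mk π j K x := by
  rw [Red.smul_mk, ← sub_eq_zero, ← map_sub, ← sub_smul, Red.mk_eq_zero]
  exact smul_mem_redSub (by rw [map_sub, H.section_eq, sub_self]) x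

theorem map_mem_redSub (f : K →ₗ[R] L) {x : K} (hx : x ∈ redSub π K) : f x ∈ redSub π L := by
  have : redSub π K ≤ (redSub π L).comap f := redSub_le fun r hr x => by
    rw [Submodule.mem_comap, map_smul]
    exact smul_mem_redSub hr _
  exact this hx

/-- The `A`-linear map `Red K → Red L` induced by an `R`-linear map `K → L`. -/
def Red.map (π : R →+* A) (j : A →+* R) (f : K →ₗ[R] L) : Red π j K →ₗ[A] Red π j L where
  toFun := (redSub π K).mapQ (redSub π L) f fun _ hx => map_mem_redSub f hx
  map_add' := map_add _
  map_smul' a x := ((redSub π K).mapQ (redSub π L) f fun _ hx => map_mem_redSub f hx).map_smul'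
    (j a) x

@[simp] theorem Red.map_mk (f : K →ₗ[R] L) (x : K) :
    Red.map π j f (Red.mk π j K x) = Red.mk π j L (f x) := rfl

/-- Under `Augmented`, `(ker π) K` equals `I K` with `I = ker (π ∘ i)`; in particular it is generated
additively by a set defined by the `B`-action alone. -/
theorem redSub_induction (H : Augmented π j i) {x : K} (hx : x ∈ redSub π K) :
    x ∈ AddSubgroup.closure {y | ∃ (b : B) (z : K), π (i b) = 0 ∧ y = i b • z} := by
  have key : ∀ r : R, π r = 0 → ∀ z : K,
      r • z ∈ AddSubgroup.closure {y | ∃ (b : B) (z : K), π (i b) = 0 ∧ y = i b • z} := by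
    intro r hr z
    have := AddSubgroup.mem_map_of_mem (((smulAddHom R K).flip z)) (H.ker_le r hr)
    rw [AddMonoidHom.map_closure] at this
    refine AddSubgroup.closure_mono ?_ this
    rintro _ ⟨_, ⟨b, s, hb, rfl⟩, rfl⟩
    exact ⟨b, s • z, hb, mul_smul _ _ _⟩
  have h2 : redSub π K ≤ {
      AddSubgroup.closure {y | ∃ (b : B) (z : K), π (i b) = 0 ∧ y = i b • z} with
      smul_mem' := by
        intro r x hx
        change x ∈ AddSubgroup.closure _ at hx
        change r • x ∈ AddSubgroup.closure _
        induction hx using AddSubgroup.closure_induction with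
        | mem x hx =>
          obtain ⟨b, z, hb, rfl⟩ := hx
          rw [smul_smul]
          exact key _ (by rw [map_mul, hb, mul_zero]) z
        | zero => rw [smul_zero]; exact zero_mem _
        | add x y _ _ hx hy => rw [smul_add]; exact add_mem hx hy
        | neg x _ hx => rw [smul_neg]; exact neg_mem hx } :=
    redSub_le key
  exact h2 hx

/-- Additive maps commuting with the action of `i b` stand in for `B`-linear maps. -/
theorem BProjective.exists_section (hK : BProjective i K) (g : P →ₗ[R] K)
    (hg : Function.Surjective g) :
    ∃ s : K →+ P, (∀ b x, s (i b • x) = i b • s x) ∧ ∀ x, g (s x) = x := by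
  let _ := Module.compHom K i
  let _ := Module.compHom P i
  have : Module.Projective B K := hK
  let g' : P →ₗ[B] K := { g with map_smul' := fun b x => g.map_smul (i b) x }
  obtain ⟨s, hs⟩ := Module.projective_lifting_property g' LinearMap.id hg
  exact ⟨s.toAddMonoidHom, fun b x => s.map_smul b x, fun x => LinearMap.congr_fun hs x⟩

theorem BProjective.of_retract (hP : BProjective i P) (f : L →ₗ[R] P) (r : P →+ L)
    (hr : ∀ b x, r (i b • x) = i b • r x) (h : ∀ x, r (f x) = x) : BProjective i L := by
  let _ := Module.compHom L i
  let _ := Module.compHom P i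
  have : Module.Projective B P := hP
  let f' : L →ₗ[B] P := { f with map_smul' := fun b x => f.map_smul (i b) x }
  let r' : P →ₗ[B] L := { r with map_smul' := hr }
  exact Module.Projective.of_split f' r' (LinearMap.ext h)

theorem BProjective.finsupp (hR : BProjective i R) (X : Type u) : BProjective i (X →₀ R) := by
  classical
  let _ := Module.compHom R i
  have : Module.Projective B R := hR
  let f : (X →₀ R) ≃ₗ[B] (Π₀ _ : X, R) :=
    { (finsuppLequivDFinsupp ℤ : (X →₀ R) ≃ₗ[ℤ] (Π₀ _ : X, R)).toAddEquiv with
      map_smul' := fun b x => by ext y; rfl }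
  exact Module.Projective.of_equiv f.symm

theorem exists_retraction (hK : BProjective i K) (f : L →ₗ[R] P) (g : P →ₗ[R] K)
    (hf : Function.Injective f) (hfg : Function.Exact f g) (hg : Function.Surjective g) :
    ∃ r : P →+ L, (∀ b x, r (i b • x) = i b • r x) ∧ ∀ x, r (f x) = x := by
  obtain ⟨s, hs, hgs⟩ := hK.exists_section g hg
  have h1 : ∀ x, ∃ y, f y = x - s (g x) := fun x => (hfg _).1 (by rw [map_sub, hgs, sub_self])
  choose r hr using h1
  refine ⟨⟨⟨r, hf ?_⟩, ?_⟩, ?_, ?_⟩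
  · rw [hr]; simp
  · intro x y
    apply hf
    rw [map_add, hr, hr, hr]; simp only [map_add]; abel
  · intro b x
    apply hf
    change f (r _) = f (i b • r x)
    rw [map_smul, hr, hr, map_smul, hs, smul_sub]
  · intro x
    apply hf
    change f (r _) = _
    rw [hr, hfg.apply_apply_eq_zero, map_zero, sub_zero]

/-- Reduction keeps an `R`-linear injection injective as soon as it splits over `B`: the retraction
maps `(ker π) P = I P` into `I L`. -/
theorem Red.map_injective (H : Augmented π j i) (f : L →ₗ[R] P) (r : P →+ L)
    (hr : ∀ b x, r (i b • x) = i b • r x) (h : ∀ x, r (f x) = x) :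
    Function.Injective (Red.map π j f) := by
  rw [injective_iff_map_eq_zero]
  intro q hq
  obtain ⟨x, rfl⟩ := Red.mk_surjective q
  rw [Red.map_mk, Red.mk_eq_zero] at hq
  rw [Red.mk_eq_zero, ← h x]
  have := AddSubgroup.mem_map_of_mem r (redSub_induction H hq)
  rw [AddMonoidHom.map_closure] at this
  refine (AddSubgroup.closure_le (redSub π L).toAddSubgroup).2 ?_ this
  rintro _ ⟨_, ⟨b, z, hb, rfl⟩, rfl⟩
  rw [hr]
  exact smul_mem_redSub hb _

theorem Red.map_surjective (g : P →ₗ[R] K) (hg : Function.Surjective g) :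
    Function.Surjective (Red.map π j g) := by
  intro q
  obtain ⟨x, rfl⟩ := Red.mk_surjective q
  obtain ⟨y, rfl⟩ := hg x
  exact ⟨Red.mk π j P y, rfl⟩

theorem Red.map_exact (f : L →ₗ[R] P) (g : P →ₗ[R] K)
    (hfg : Function.Exact f g) (hg : Function.Surjective g) :
    Function.Exact (Red.map π j f) (Red.map π j g) := by
  intro q
  constructor
  · obtain ⟨x, rfl⟩ := Red.mk_surjective q
    intro h
    rw [Red.map_mk, Red.mk_eq_zero] at h
    have h2 : redSub π K ≤ (redSub π P).map g := redSub_le fun r hr z => by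
      obtain ⟨y, rfl⟩ := hg z
      exact ⟨r • y, smul_mem_redSub hr y, map_smul _ _ _⟩
    obtain ⟨y, hy, hyx⟩ := h2 h
    obtain ⟨l, hl⟩ := (hfg (x - y)).1 (by rw [map_sub, hyx, sub_self])
    refine ⟨Red.mk π j L l, ?_⟩
    rw [Red.map_mk, hl, map_sub, Red.mk_eq_zero.2 hy, sub_zero]
  · rintro ⟨q, rfl⟩
    obtain ⟨x, rfl⟩ := Red.mk_surjective q
    rw [Red.map_mk, Red.map_mk, hfg.apply_apply_eq_zero, map_zero]

/-- Base change preserves projectivity: `A`-linear maps out of `Red K` are the `R`-linear maps out of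
`K` with values in an `A`-module. -/
theorem Red.projective (H : Augmented π j i) [Module.Projective R K] :
    Module.Projective A (Red π j K) := by
  refine Module.Projective.of_lifting_property'' fun f hf => ?_
  let _ : Module R (Red π j K →₀ A) := Module.compHom _ π
  let _ : Module R (Red π j K) := Module.compHom _ π
  let f' : (Red π j K →₀ A) →ₗ[R] Red π j K :=
    { f with map_smul' := fun r x => f.map_smul (π r) x }
  let q : K →ₗ[R] Red π j K := { Red.mk π j K with map_smul' := fun r x => Red.mk_smul H r x }
  obtain ⟨h, hh⟩ := Module.projective_lifting_property f' q hf
  have hle : redSub π K ≤ LinearMap.ker h := redSub_le fun r hr x => by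
    rw [LinearMap.mem_ker, map_smul]
    change π r • h x = 0
    rw [hr, zero_smul]
  let h' : Red π j K →ₗ[A] (Red π j K →₀ A) :=
    { toFun := (redSub π K).liftQ h hle
      map_add' := map_add _
      map_smul' := by
        intro a x
        refine (((redSub π K).liftQ h hle).map_smul' (j a) x).trans ?_
        change π (j a) • (redSub π K).liftQ h hle x = a • (redSub π K).liftQ h hle x
        rw [H.section_eq] }
  refine ⟨h', LinearMap.ext fun x => ?_⟩
  obtain ⟨x, rfl⟩ := Red.mk_surjective x
  exact LinearMap.congr_fun hh x

/-- An endomorphism inducing the identity on the reduction is invertible, since `(1 - u) ^ m` takes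
values in `I ^ m L`. -/
theorem isUnit_of_red_eq (H : Augmented π j i) (u : Module.End R L)
    (hu : ∀ x, u x - x ∈ redSub π L) : IsUnit u := by
  obtain ⟨T, N, hT0, hT, hTN⟩ := H.nilpotent
  have key : ∀ m x, ((1 - u) ^ m) x ∈
      AddSubgroup.closure {y | ∃ b ∈ T m, ∃ z : L, y = i b • z} := by
    intro m
    induction m with
    | zero => exact fun x => AddSubgroup.subset_closure ⟨1, hT0, x, by simp⟩
    | succ m ih =>
      intro x
      rw [pow_succ']
      change (1 - u) (((1 - u) ^ m) x) ∈ _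
      have := AddSubgroup.mem_map_of_mem (1 - u).toAddMonoidHom (ih x)
      rw [AddMonoidHom.map_closure] at this
      refine (AddSubgroup.closure_le _).2 ?_ this
      rintro _ ⟨_, ⟨b, hb, z, rfl⟩, rfl⟩
      change (1 - u) (i b • z) ∈ AddSubgroup.closure _
      rw [map_smul]
      have hz : (1 - u) z ∈ redSub π L := by
        have := neg_mem (hu z)
        rwa [neg_sub] at this
      have := AddSubgroup.mem_map_of_mem (DistribSMul.toAddMonoidHom L (i b))
        (redSub_induction H hz)
      rw [AddMonoidHom.map_closure] at this
      refine AddSubgroup.closure_mono ?_ this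
      rintro _ ⟨_, ⟨c, y, hc, rfl⟩, rfl⟩
      refine ⟨b * c, hT m b c hb hc, y, ?_⟩
      rw [map_mul, mul_smul]; rfl
  have hnil : IsNilpotent (1 - u) := by
    refine ⟨N, LinearMap.ext fun x => ?_⟩
    have := (AddSubgroup.closure_le (⊥ : AddSubgroup L)).2 ?_ (key N x)
    · exact this
    · rintro _ ⟨b, hb, z, rfl⟩
      simp [hTN b hb]
  simpa using hnil.isUnit_one_sub

/-- Reduction reflects projectivity on `B`-projective modules, by splitting a presentation `g` with
kernel `f`. -/
theorem projective_of_red_aux (H : Augmented π j i) (hK : BProjective i K) [Module.Projective R P]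
    [Module.Projective A (Red π j K)] (f : L →ₗ[R] P) (g : P →ₗ[R] K)
    (hf : Function.Injective f) (hfg : Function.Exact f g) (hg : Function.Surjective g) :
    Module.Projective R K := by
  obtain ⟨r, hr, hrf⟩ := exists_retraction hK f g hf hfg hg
  have hinj := Red.map_injective H f r hr hrf
  have hex := Red.map_exact (π := π) (j := j) f g hfg hg
  have hsurj := Red.map_surjective (π := π) (j := j) g hg
  -- the reduced sequence splits, giving a retraction `ρ` of `Red f`
  obtain ⟨σ, hσ⟩ := Module.projective_lifting_property (Red.map π j g) LinearMap.id hsurj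
  have hσ' : ∀ x, Red.map π j g (σ x) = x := fun x => LinearMap.congr_fun hσ x
  have h1 : ∀ q, ∃ l, Red.map π j f l = q - σ (Red.map π j g q) := fun q =>
    (hex _).1 (by rw [map_sub, hσ', sub_self])
  choose ρ hρ using h1
  -- `t` is `ρ` composed with `P → Red P`; it lifts along `L → Red L` to `h : P → L`
  let _ : Module R (Red π j L) := Module.compHom _ π
  let q : L →ₗ[R] Red π j L :=
    { Red.mk π j L with map_smul' := fun r x => Red.mk_smul H r x }
  let t : P →ₗ[R] Red π j L :=
    { toFun := fun x => ρ (Red.mk π j _ x)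
      map_add' := fun x y => hinj (by
        rw [(Red.map π j f).map_add, hρ, hρ, hρ]; simp only [map_add]; abel)
      map_smul' := fun r x => hinj (by
        change Red.map π j f (ρ (Red.mk π j P (r • x))) =
          Red.map π j f (π r • ρ (Red.mk π j P x))
        rw [(Red.map π j f).map_smul, hρ, hρ, Red.mk_smul H, (Red.map π j g).map_smul,
          σ.map_smul, smul_sub]) }
  obtain ⟨h, hh⟩ := Module.projective_lifting_property q t Red.mk_surjective
  have hu : IsUnit (h ∘ₗ f) := isUnit_of_red_eq H _ fun x => by
    rw [← Red.mk_eq_zero (j := j), map_sub, sub_eq_zero]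
    refine (LinearMap.congr_fun hh (f x)).trans (hinj ?_)
    change Red.map π j f (ρ (Red.mk π j _ (f x))) = _
    rw [hρ, ← Red.map_mk, hex.apply_apply_eq_zero, map_zero, sub_zero]
  obtain ⟨w, hw⟩ := hu.exists_left_inv
  have hret : (w ∘ₗ h) ∘ₗ f = LinearMap.id := hw
  -- a retraction of `f` provides a section of `g`
  obtain ⟨s, hs⟩ := ((hfg.split_tfae'.out 1 0 :).1 ⟨hg, _, hret⟩).2
  exact Module.Projective.of_split s g hs

theorem projective_red_iff (H : Augmented π j i) (hK : BProjective i K) :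
    Module.Projective A (Red π j K) ↔ Module.Projective R K := by
  refine ⟨fun _ => ?_, fun _ => Red.projective H⟩
  have hg := Finsupp.linearCombination_id_surjective R K
  exact projective_of_red_aux H hK (Submodule.subtype _) _ Subtype.val_injective
    (LinearMap.exact_subtype_ker_map _) hg

theorem shortExact_of {f : L →ₗ[R] P} {g : P →ₗ[R] K}
    (hf : Function.Injective f) (hfg : Function.Exact f g) (hg : Function.Surjective g) :
    ∃ S : ShortComplex (ModuleCat.{u} R), S.X₁ = ModuleCat.of R L ∧ S.X₂ = ModuleCat.of R P ∧
      S.X₃ = ModuleCat.of R K ∧ S.ShortExact := by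
  let S := ShortComplex.mk (ModuleCat.ofHom f) (ModuleCat.ofHom g)
    (by ext x; exact hfg.apply_apply_eq_zero x)
  exact ⟨S, rfl, rfl, rfl, ModuleCat.shortComplex_shortExact S hfg hf hg⟩

theorem hasPD_succ_iff {f : L →ₗ[R] P} {g : P →ₗ[R] K}
    (hf : Function.Injective f) (hfg : Function.Exact f g) (hg : Function.Surjective g)
    [hP : Module.Projective R P] (n : ℕ) :
    HasProjectiveDimensionLT (ModuleCat.of R K) (n + 2) ↔
      HasProjectiveDimensionLT (ModuleCat.of R L) (n + 1) := by
  obtain ⟨S, h1, h2, h3, hS⟩ := shortExact_of hf hfg hg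
  rw [← h1, ← h3]
  refine hS.hasProjectiveDimensionLT_X₃_iff n ?_
  rw [h2]
  exact (IsProjective.iff_projective P).1 hP

/-- Reduction preserves and reflects bounds on the projective dimension of `B`-projective modules: the
syzygy of `K` in a free presentation is again `B`-projective, and its reduction is a syzygy of
`Red K`. -/
theorem hasPD_red_iff (H : Augmented π j i) (n : ℕ) : ∀ (K : Type u) [AddCommGroup K] [Module R K],
    BProjective i K → (HasProjectiveDimensionLT (ModuleCat.of A (Red π j K)) (n + 1) ↔
      HasProjectiveDimensionLT (ModuleCat.of R K) (n + 1)) := by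
  induction n with
  | zero =>
    intro K _ _ hK
    rw [zero_add, ← projective_iff_hasProjectiveDimensionLT_one,
      ← projective_iff_hasProjectiveDimensionLT_one, ← IsProjective.iff_projective,
      ← IsProjective.iff_projective]
    exact projective_red_iff H hK
  | succ n ih =>
    intro K _ _ hK
    have hg := Finsupp.linearCombination_id_surjective R K
    obtain ⟨L, _, _, f, hf, hfg⟩ : ∃ (L : Type u) (_ : AddCommGroup L) (_ : Module R L)
        (f : L →ₗ[R] (K →₀ R)), Function.Injective f ∧
          Function.Exact f (Finsupp.linearCombination R (id : K → K)) :=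
      ⟨LinearMap.ker (Finsupp.linearCombination R (id : K → K)), inferInstance, inferInstance,
        Submodule.subtype _, Subtype.val_injective, LinearMap.exact_subtype_ker_map _⟩
    obtain ⟨r, hr, hrf⟩ := exists_retraction hK f _ hf hfg hg
    have : Module.Projective A (Red π j (K →₀ R)) := Red.projective H
    rw [hasPD_succ_iff hf hfg hg, hasPD_succ_iff (Red.map_injective H f r hr hrf)
      (Red.map_exact (π := π) (j := j) f _ hfg hg) (Red.map_surjective _ hg)]
    exact ih L ((H.projective.finsupp K).of_retract f r hr hrf)

end Reduction

/-! ### The enveloping algebra `A ⊗ₖ Qᵒᵖ` of an augmented algebra `Q` -/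

section Tensor

variable {k : Type v} [Field k] {A Q : Type u} [Ring A] [Algebra k A] [Ring Q] [Algebra k Q]

/-- The algebra map `A ⊗ₖ Qᵒᵖ → A`, `a ⊗ b ↦ a ε(b)`, attached to a character `ε` of `Q`. -/
def augTensor (ε : Q →ₐ[k] k) : A ⊗[k] Qᵐᵒᵖ →ₐ[k] A :=
  Algebra.TensorProduct.lift (AlgHom.id k A)
    ((Algebra.ofId k A).comp (ε.fromOpposite fun _ _ => mul_comm _ _))
    fun _ _ => (Algebra.commutes _ _).symm

theorem augTensor_tmul (ε : Q →ₐ[k] k) (a : A) (b : Qᵐᵒᵖ) :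
    augTensor ε (a ⊗ₜ[k] b) = a * algebraMap k A (ε b.unop) := rfl

/-- The ring map `a ↦ a ⊗ 1`. -/
abbrev leftHom (k : Type v) [Field k] (A Q : Type u) [Ring A] [Algebra k A] [Ring Q]
    [Algebra k Q] : A →+* A ⊗[k] Qᵐᵒᵖ :=
  (Algebra.TensorProduct.includeLeft : A →ₐ[k] A ⊗[k] Qᵐᵒᵖ).toRingHom

/-- The ring map `b ↦ 1 ⊗ b`. -/
abbrev rightHom (k : Type v) [Field k] (A Q : Type u) [Ring A] [Algebra k A] [Ring Q]
    [Algebra k Q] : Qᵐᵒᵖ →+* A ⊗[k] Qᵐᵒᵖ :=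
  (Algebra.TensorProduct.includeRight : Qᵐᵒᵖ →ₐ[k] A ⊗[k] Qᵐᵒᵖ).toRingHom

theorem leftHom_apply (a : A) : leftHom k A Q a = a ⊗ₜ[k] 1 := rfl
theorem rightHom_apply (b : Qᵐᵒᵖ) : rightHom k A Q b = 1 ⊗ₜ[k] b := rfl

theorem augTensor_rightHom [Nontrivial A] (ε : Q →ₐ[k] k) (b : Qᵐᵒᵖ) :
    (augTensor ε).toRingHom (rightHom k A Q b) = 0 ↔ ε b.unop = 0 := by
  change augTensor ε ((1 : A) ⊗ₜ[k] b) = 0 ↔ _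
  rw [augTensor_tmul, one_mul, map_eq_zero]

/-- `A ⊗ₖ Qᵒᵖ` is free over `Qᵒᵖ`, being the extension of scalars of the `k`-vector space `A`. -/
theorem bProjective_tensor : BProjective (rightHom k A Q) (A ⊗[k] Qᵐᵒᵖ) := by
  let _ := Module.compHom (A ⊗[k] Qᵐᵒᵖ) (rightHom k A Q)
  let f : (Qᵐᵒᵖ ⊗[k] A) ≃ₗ[Qᵐᵒᵖ] (A ⊗[k] Qᵐᵒᵖ) :=
    { (TensorProduct.comm k Qᵐᵒᵖ A).toAddEquiv with
      map_smul' := fun b x => by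
        change TensorProduct.comm k Qᵐᵒᵖ A (b • x) =
          rightHom k A Q b * TensorProduct.comm k Qᵐᵒᵖ A x
        induction x with
        | zero => simp
        | add x y hx hy => rw [smul_add, map_add, hx, hy, map_add, mul_add]
        | tmul c a =>
          rw [TensorProduct.smul_tmul', TensorProduct.comm_tmul, TensorProduct.comm_tmul,
            rightHom_apply, Algebra.TensorProduct.tmul_mul_tmul, one_mul, smul_eq_mul] }
  exact Module.Projective.of_equiv f

variable {p : A →+* Q} {ε : Q →ₐ[k] k}

/-- The abstract reduction setting holds for `A ⊗ₖ Qᵒᵖ → A` when `ker ε` is contained in the image of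
a nilpotent two-sided ideal `J` of `A`. -/
theorem augmented_tensor [Nontrivial A] (J : Ideal A) [J.IsTwoSided] (N : ℕ) (hN : J ^ N = ⊥)
    (hJ : ∀ x, ε x = 0 → ∃ a ∈ J, p a = x) :
    Augmented (augTensor ε).toRingHom (leftHom k A Q) (rightHom k A Q) where
  section_eq a := by
    change augTensor ε (a ⊗ₜ[k] 1) = a
    rw [augTensor_tmul]; simp
  ker_le r hr := by
    -- `a ⊗ b - a ε(b) ⊗ 1 = (1 ⊗ (b - ε(b))) (a ⊗ 1)`
    have key : ∀ r : A ⊗[k] Qᵐᵒᵖ, r - leftHom k A Q (augTensor ε r) ∈ AddSubgroup.closure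
        {x | ∃ (b : Qᵐᵒᵖ) (s : A ⊗[k] Qᵐᵒᵖ),
          (augTensor ε).toRingHom (rightHom k A Q b) = 0 ∧ x = rightHom k A Q b * s} := by
      intro r
      induction r with
      | zero => rw [map_zero, map_zero, sub_zero]; exact zero_mem _
      | add x y hx hy => rw [map_add, map_add, add_sub_add_comm]; exact add_mem hx hy
      | tmul a b =>
        refine AddSubgroup.subset_closure ⟨b - algebraMap k _ (ε b.unop), a ⊗ₜ 1, ?_, ?_⟩
        · rw [augTensor_rightHom]; simp
        · rw [rightHom_apply, leftHom_apply, augTensor_tmul,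
            Algebra.TensorProduct.tmul_mul_tmul, one_mul, mul_one, TensorProduct.tmul_sub,
            Algebra.algebraMap_eq_smul_one (A := Qᵐᵒᵖ), TensorProduct.tmul_smul,
            TensorProduct.smul_tmul', ← Algebra.commutes, ← Algebra.smul_def]
    have := key r
    rwa [show augTensor ε r = 0 from hr, map_zero, sub_zero] at this
  nilpotent := by
    refine ⟨fun m => {b | ∃ a ∈ J ^ m, p a = b.unop}, N, ⟨1, ?_, map_one p⟩, ?_, ?_⟩
    · rw [Submodule.pow_zero, Ideal.one_eq_top]; trivial
    · rintro m b c ⟨a, ha, hab⟩ hc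
      obtain ⟨a', ha', hac⟩ := hJ _ ((augTensor_rightHom ε c).1 hc)
      refine ⟨a' * a, ?_, by rw [map_mul, hab, hac, MulOpposite.unop_mul]⟩
      rw [Ideal.IsTwoSided.pow_succ]
      exact Ideal.mul_mem_mul ha' ha
    · rintro b ⟨a, ha, hab⟩
      rw [hN, Ideal.mem_bot] at ha
      rw [ha, map_zero] at hab
      exact MulOpposite.unop_injective hab.symm
  projective := bProjective_tensor

variable [Module (A ⊗[k] Qᵐᵒᵖ) Q]

theorem bProjective_self (h : ∀ (b : Qᵐᵒᵖ) (x : Q), rightHom k A Q b • x = x * b.unop) :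
    BProjective (rightHom k A Q) Q := by
  let _ : Module Qᵐᵒᵖ Q := Module.compHom Q (rightHom k A Q)
  let f : Qᵐᵒᵖ ≃ₗ[Qᵐᵒᵖ] Q :=
    { MulOpposite.opAddEquiv.symm with
      map_smul' := fun b x => (h b x.unop).symm }
  exact Module.Projective.of_equiv f

/-- The reduction of the bimodule `Q` is `A/ker (ε ∘ p)`, presented here as any `A`-module quotient `S`
of `A` with that kernel. -/
theorem red_self [Nontrivial A]
    (hsmul : ∀ (a : A) (b : Qᵐᵒᵖ) (x : Q), (a ⊗ₜ[k] b) • x = p a * x * b.unop)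
    (hp : Function.Surjective p)
    (H : Augmented (augTensor ε).toRingHom (leftHom k A Q) (rightHom k A Q))
    {S : Type u} [AddCommGroup S] [Module A S] (f : A →ₗ[A] S) (hf : Function.Surjective f)
    (hker : ∀ a, f a = 0 ↔ ε (p a) = 0) :
    Nonempty (Red (augTensor ε).toRingHom (leftHom k A Q) Q ≃ₗ[A] S) := by
  have hr : ∀ (b : Qᵐᵒᵖ) (x : Q), rightHom k A Q b • x = x * b.unop := fun b x => by
    rw [rightHom_apply, hsmul, map_one, one_mul]
  let g : A →ₗ[A] Red (augTensor ε).toRingHom (leftHom k A Q) Q :=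
    LinearMap.toSpanSingleton A _ (Red.mk _ _ Q 1)
  have hg : ∀ a, g a = Red.mk _ _ Q (p a) := fun a => by
    rw [LinearMap.toSpanSingleton_apply, Red.smul_mk, leftHom_apply, hsmul]; simp
  have hgs : Function.Surjective g := fun y => by
    obtain ⟨x, rfl⟩ := Red.mk_surjective y
    obtain ⟨a, rfl⟩ := hp x
    exact ⟨a, hg a⟩
  have hgk : ∀ a, g a = 0 ↔ ε (p a) = 0 := fun a => by
    rw [hg, Red.mk_eq_zero]
    constructor
    · intro hx
      refine (AddSubgroup.closure_le (ε : Q →+ k).ker).2 ?_ (redSub_induction H hx)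
      rintro _ ⟨b, z, hb, rfl⟩
      change ε (rightHom k A Q b • z) = 0
      rw [hr, map_mul, (augTensor_rightHom ε b).1 hb, mul_zero]
    · intro hx
      have := smul_mem_redSub (π := (augTensor ε).toRingHom)
        ((augTensor_rightHom (A := A) ε (MulOpposite.op (p a))).2 hx) (1 : Q)
      rwa [hr, one_mul] at this
  have hk : LinearMap.ker g = LinearMap.ker f := by
    ext a
    rw [LinearMap.mem_ker, LinearMap.mem_ker, hgk, hker]
  exact ⟨(g.quotKerEquivOfSurjective hgs).symm ≪≫ₗ Submodule.quotEquivOfEq _ _ hk ≪≫ₗ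
    f.quotKerEquivOfSurjective hf⟩

end Tensor

/-! ### The character and the simple module attached to a primitive idempotent -/

section Elementary

variable {k : Type v} [Field k] {A : Type u} [Ring A] [Algebra k A]

/-- A primitive idempotent maps to a coordinate idempotent of `kⁿ`: otherwise a coordinate idempotent
below its image lifts, modulo the nil kernel, to an idempotent splitting `e`. -/
theorem exists_eq_single {e : A} (he : IsPrimitiveIdempotent A e) {n : ℕ}
    (φ : A →ₐ[k] (Fin n → k)) (hφ : Function.Surjective φ)
    (hnil : ∀ x, φ x = 0 → IsNilpotent x) : ∃ i, φ e = Pi.single i 1 := by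
  obtain ⟨hidem, hne, hprim⟩ := he
  have h01 : ∀ i, φ e i = 0 ∨ φ e i = 1 := fun i => by
    have : φ e i * φ e i = φ e i := by rw [← Pi.mul_apply, ← map_mul, hidem.eq]
    exact IsIdempotentElem.iff_eq_zero_or_one.1 this
  obtain ⟨i, hi⟩ : ∃ i, φ e i = 1 := by
    by_contra hcon
    push Not at hcon
    have h0 : φ e = 0 := funext fun i => (h01 i).resolve_right (hcon i)
    obtain ⟨m, hm⟩ := hnil e h0
    rcases m with _ | m
    · rw [pow_zero] at hm
      exact hne (by rw [← mul_one e, hm, mul_zero])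
    · exact hne (by rw [← hidem.pow_succ_eq m, hm])
  refine ⟨i, ?_⟩
  have hs : IsIdempotentElem (Pi.single i 1 : Fin n → k) := by
    ext l
    rcases eq_or_ne l i with rfl | hl <;> simp [*]
  have hes : φ e * Pi.single i 1 = Pi.single i 1 := by
    ext l
    rcases eq_or_ne l i with rfl | hl <;> simp [*]
  -- lift the coordinate idempotent to an idempotent `f` orthogonal to `1 - e`
  obtain ⟨f, hf, hfi, h1, h2⟩ := exists_isIdempotentElem_mul_eq_zero_of_ker_isNilpotent
    (φ : A →+* (Fin n → k)) hnil (Pi.single i 1) (hφ _) hs (1 - e) hidem.one_sub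
    (by
      change Pi.single i 1 * φ (1 - e) = 0
      rw [map_sub, map_one, mul_sub, mul_one, mul_comm, hes, sub_self])
    (by
      change φ (1 - e) * Pi.single i 1 = 0
      rw [map_sub, map_one, sub_mul, one_mul, hes, sub_self])
  have hfe : f * e = f := by rw [mul_sub, mul_one, sub_eq_zero] at h1; exact h1.symm
  have hef : e * f = f := by rw [sub_mul, one_mul, sub_eq_zero] at h2; exact h2.symm
  have hfφ : φ f = Pi.single i 1 := hfi
  have hef2 : IsIdempotentElem (e - f) := by
    rw [IsIdempotentElem, mul_sub, sub_mul, sub_mul, hidem.eq, hfe, hef, hf.eq, sub_self, sub_zero]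
  rcases hprim f (e - f) hf hef2 (by rw [mul_sub, hfe, hf.eq, sub_self])
    (by rw [sub_mul, hef, hf.eq, sub_self]) (by abel) with h | h
  · rw [h, map_zero] at hfφ
    have := congrFun hfφ i
    simp at this
  · rw [sub_eq_zero.1 h, hfφ]

/-- A character of `A` with value `1` at `e` factors through `Ā`. -/
theorem cornerQuot_lift (e : A) [Algebra k (CornerQuot A e)]
    (halg : ∀ c : k, algebraMap k (CornerQuot A e) c = cornerQuotMk A e (algebraMap k A c))
    (χ : A →ₐ[k] k) (hχ : χ e = 1) :
    ∃ ε : CornerQuot A e →ₐ[k] k, ∀ a, ε (cornerQuotMk A e a) = χ a := by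
  have hle : (TwoSidedIdeal.span {1 - e} : TwoSidedIdeal A) ≤ TwoSidedIdeal.ker χ := by
    rw [TwoSidedIdeal.span_le]
    rintro _ rfl
    change _ ∈ TwoSidedIdeal.ker χ
    rw [TwoSidedIdeal.mem_ker, map_sub, map_one, hχ, sub_self]
  have h : (TwoSidedIdeal.span {1 - e} : TwoSidedIdeal A).ringCon ≤ RingCon.ker (χ : A →+* k) := by
    intro x y hxy
    have h1 := hle ((TwoSidedIdeal.rel_iff _ _ _).1 hxy)
    rw [TwoSidedIdeal.mem_ker, map_sub, sub_eq_zero] at h1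
    exact h1
  refine ⟨{ RingCon.lift _ (χ : A →+* k) h with commutes' := fun c => ?_ }, fun a => rfl⟩
  rw [halg]
  exact χ.commutes c

theorem cornerQuotMk_mul_self (e a : A) : cornerQuotMk A e (a * e) = cornerQuotMk A e a := by
  have h : cornerQuotMk A e (1 - e) = 0 := by
    have := TwoSidedIdeal.subset_span (s := {1 - e}) (Set.mem_singleton (1 - e))
    rw [← map_zero (cornerQuotMk A e)]
    exact (RingCon.eq _).2 this
  rw [map_sub, map_one, sub_eq_zero] at h
  rw [map_mul, ← h, mul_one]

/-- The projection `A → Ae/Je = S`, `a ↦ [a e]`. -/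
def toCornerSimple (e : A) : A →ₗ[A] CornerSimple A e :=
  (Submodule.mkQ _).comp (LinearMap.toSpanSingleton A A e).rangeRestrict

theorem toCornerSimple_surjective (e : A) : Function.Surjective (toCornerSimple e) :=
  (Submodule.mkQ_surjective _).comp (LinearMap.toSpanSingleton A A e).surjective_rangeRestrict

theorem toCornerSimple_eq_zero (e a : A) :
    toCornerSimple e a = 0 ↔ ∃ b ∈ (⊥ : Ideal A).jacobson, b * e = a * e := by
  refine (Submodule.Quotient.mk_eq_zero _).trans ?_
  rfl

end Elementary

/-! ### The equality of projective dimensions -/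

/-- Let `k` be a field, `A` a finite-dimensional elementary `k`-algebra with
Jacobson radical `J`, `e` a primitive idempotent of `A`, `S = Ae/Je` the corresponding simple
left `A`-module and `Ā = A/A(1-e)A`.  Then `pd_A S = pd_{A ⊗ₖ Āᵒᵖ} Ā`, where `Ā` is a module
over `A ⊗ₖ Āᵒᵖ` via its natural `A`-`Ā`-bimodule structure `(a ⊗ b) • x = ā x b`. -/
theorem projDim_simple_eq_projDim_bimodule
    (k : Type v) [Field k] (A : Type u) [Ring A] [Algebra k A] [FiniteDimensional k A]
    (hA : IsElementary k A) (e : A) (he : IsPrimitiveIdempotent A e)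
    [Algebra k (CornerQuot A e)]
    (halg : ∀ c : k, algebraMap k (CornerQuot A e) c = cornerQuotMk A e (algebraMap k A c))
    [Module (A ⊗[k] (CornerQuot A e)ᵐᵒᵖ) (CornerQuot A e)]
    (hsmul : ∀ (a : A) (b : (CornerQuot A e)ᵐᵒᵖ) (x : CornerQuot A e),
      (a ⊗ₜ[k] b) • x = cornerQuotMk A e a * x * b.unop) :
    projDim A (CornerSimple A e) =
      projDim (A ⊗[k] (CornerQuot A e)ᵐᵒᵖ) (CornerQuot A e) := by
  obtain ⟨n, φ, hφ, hker⟩ := hA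
  have hmem : ∀ a, a ∈ (⊥ : Ideal A).jacobson ↔ φ a = 0 := fun a => by
    rw [← hker]; exact RingHom.mem_ker
  have : IsArtinianRing A := IsArtinianRing.of_finite k A
  obtain ⟨N, hN⟩ := IsArtinianRing.isNilpotent_jacobson_bot (R := A)
  have hnil : ∀ x, φ x = 0 → IsNilpotent x := fun x hx =>
    ⟨N, by simpa [hN] using Ideal.pow_mem_pow ((hmem x).2 hx) N⟩
  have : Nontrivial A := nontrivial_of_ne e 0 he.2.1
  obtain ⟨i, hi⟩ := exists_eq_single he φ hφ hnil
  let χ : A →ₐ[k] k := (Pi.evalAlgHom k (fun _ : Fin n => k) i).comp φ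
  -- multiplication by `e` kills all coordinates but the one of `e`
  have hφe : ∀ a, φ (a * e) = Pi.single i (χ a) := fun a => by
    ext l
    rw [map_mul, hi]
    rcases eq_or_ne l i with rfl | hl
    · simp [χ]
    · simp [hl]
  have hχe : χ e = 1 := by
    change φ e i = 1
    rw [hi, Pi.single_eq_same]
  obtain ⟨ε, hε⟩ := cornerQuot_lift e halg χ hχe
  have hp : Function.Surjective (cornerQuotMk A e) := RingCon.mk'_surjective _
  -- an element `a` of `ker χ` has the same image in `Ā` as `a * e`, which lies in `J`
  have H := augmented_tensor (ε := ε) (p := cornerQuotMk A e) _ N hN (by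
    intro x hx
    obtain ⟨a, rfl⟩ := hp x
    rw [hε] at hx
    exact ⟨a * e, (hmem _).2 (by rw [hφe, hx, Pi.single_zero]), cornerQuotMk_mul_self e a⟩)
  obtain ⟨E⟩ := red_self hsmul hp H (toCornerSimple e) (toCornerSimple_surjective e) (by
    intro a
    rw [hε, toCornerSimple_eq_zero]
    constructor
    · rintro ⟨b, hb, hba⟩
      have h1 := congrArg χ hba
      rw [map_mul, map_mul, hχe, mul_one, mul_one] at h1
      rw [← h1]
      exact congrFun ((hmem b).1 hb) i
    · intro ha
      exact ⟨a * e, (hmem _).2 (by rw [hφe, ha, Pi.single_zero]), by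
        rw [mul_assoc, he.1.eq]⟩)
  have hQ : BProjective (rightHom k A (CornerQuot A e)) (CornerQuot A e) :=
    bProjective_self fun b x => by rw [rightHom_apply, hsmul, map_one, one_mul]
  have key : ∀ m : ℕ, projDim A (CornerSimple A e) ≤ m ↔
      projDim (A ⊗[k] (CornerQuot A e)ᵐᵒᵖ) (CornerQuot A e) ≤ m := fun m => by
    rw [projDim_le_iff, projDim_le_iff, ← hasPD_red_iff H m _ hQ]
    exact ⟨fun _ => hasProjectiveDimensionLT_of_iso E.symm.toModuleIso _,
      fun _ => hasProjectiveDimensionLT_of_iso E.toModuleIso _⟩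
  refine eq_of_forall_ge_iff fun c => ?_
  induction c using ENat.recTopCoe with
  | top => simp
  | coe m => exact key m
end

section
/- Let k be a field, A and B finite-dimensional k-algebras, and P a finitely generated projective A-B-bimodule (i.e., finitely generated and projective as a module over A ⊗_k B^op). Then for every element a of the Jacobson radical J of A, the Hattori-Stallings trace of the right B-module endomorphism l_a of P (left multiplication by a) vanishes: tr_{P_B}(l_a) = 0 in B/[B,B]. -/
/-!
Over a noncommutative ring `B`, a dual basis `(v_i, f_i)` of a right `B`-module `P` inverts
`φ_P` explicitly (`eq_sum_mk_comp_hsPhi`, `hsPhi_surjective`), which gives the formula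
`tr_P(g) = ∑ f_i(g(v_i)) + [B,B]` of `hsTr_eq_mk_sum`.

Let `R = A ⊗ Bᵒᵖ`. The projective module `P` is a retract `P → Rⁿ → P`, with maps `i` and `q`. A
`k`-basis `b_s` of `A` is a basis of `R` over `Bᵒᵖ`, so the elements `(b_s ⊗ 1) q(e_j)` and the
functionals `p ↦ (b_s^* ⊗ id)(i(p)_j)` form a dual basis of the right `B`-module `P`. With
`r_j = i(q(e_j))_j ∈ R`, the trace of `l_a` becomes the class of
`∑_j ∑_s (b_s^* ⊗ id)((a b_s ⊗ 1) r_j)`. For `r_j` a pure tensor `y ⊗ c` the inner sum is the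
`k`-trace of `x ↦ a x y` on `A`, times `c`. An element `a` of the Jacobson radical is nilpotent
and left multiplications commute with right ones, so this endomorphism is nilpotent and its trace
is zero (`sum_contractFst_mul_mul_eq_zero`). The sum thus vanishes already in `B`.
-/

open MulOpposite TensorProduct

/-! ### Dual bases and the Hattori–Stallings trace -/

section DualBasis

variable {B : Type*} [Ring B] {P : Type*} [AddCommGroup P] [Module Bᵐᵒᵖ P]
  {ι : Type*} [Fintype ι] (v : ι → P) (f : ι → (P →ₗ[Bᵐᵒᵖ] B))

/-- A dual basis `(v, f)` of `P` reconstructs an element of `P ⊗_B Hom_B(P,B)` from its image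
under `φ_P`: since `f_i(p) · g = f_i ∘ φ_P(p ⊗ g)`, balancing turns
`p ⊗ g = ∑ v_i f_i(p) ⊗ g` into `∑ v_i ⊗ f_i ∘ φ_P(p ⊗ g)`. -/
lemma eq_sum_mk_comp_hsPhi (hvf : ∀ p, ∑ i, op (f i p) • v i = p) (x : HSTen B P) :
    x = ∑ i, (QuotientAddGroup.mk (v i ⊗ₜ[ℤ] ((f i).comp (hsPhi B P x))) : HSTen B P) := by
  induction x using QuotientAddGroup.induction_on with | H t => ?_
  induction t using TensorProduct.induction_on with
  | zero => simp
  | add x y hx hy =>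
    conv_lhs => rw [QuotientAddGroup.mk_add, hx, hy]
    rw [← Finset.sum_add_distrib]
    refine Finset.sum_congr rfl fun i _ => ?_
    rw [QuotientAddGroup.mk_add, map_add, LinearMap.comp_add, TensorProduct.tmul_add,
      QuotientAddGroup.mk_add]
  | tmul p g =>
    have hmove (i : ι) :
        (QuotientAddGroup.mk ((op (f i p) • v i) ⊗ₜ[ℤ] g) : HSTen B P) =
          QuotientAddGroup.mk (v i ⊗ₜ[ℤ]
            ((f i).comp (hsPhi B P (QuotientAddGroup.mk (p ⊗ₜ[ℤ] g))))) := by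
      have hcomp : (f i).comp (hsPhi B P (QuotientAddGroup.mk (p ⊗ₜ[ℤ] g))) = f i p • g := by
        ext z
        show f i (op (g z) • p) = f i p * g z
        rw [map_smul]
        rfl
      rw [hcomp]
      refine (QuotientAddGroup.eq.2 ?_).symm
      refine AddSubgroup.subset_closure ⟨v i, f i p, g, ?_⟩
      abel
    conv_lhs => rw [← hvf p, TensorProduct.sum_tmul]
    rw [← Finset.sum_congr rfl fun i _ => hmove i]
    exact map_sum (QuotientAddGroup.mk' (hsBal B P)) _ _

lemma hsPhi_surjective (hvf : ∀ p, ∑ i, op (f i p) • v i = p) :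
    Function.Surjective (hsPhi B P) := by
  intro g
  refine ⟨∑ i, QuotientAddGroup.mk (v i ⊗ₜ[ℤ] ((f i).comp g)), ?_⟩
  rw [map_sum]
  ext z
  rw [LinearMap.sum_apply]
  exact hvf (g z)

/-- The Hattori–Stallings trace computed in a dual basis: `tr_P(g) = ∑ f_i(g(v_i)) + [B,B]`. -/
lemma hsTr_eq_mk_sum (hvf : ∀ p, ∑ i, op (f i p) • v i = p) (g : P →ₗ[Bᵐᵒᵖ] P) :
    hsTr B P g = (QuotientAddGroup.mk (∑ i, f i (g (v i))) : HH0 B) := by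
  -- surjectivity of `φ_P` is what makes `Function.invFun` a genuine preimage
  have hinv : hsPhi B P (Function.invFun (hsPhi B P) g) = g :=
    Function.invFun_eq (hsPhi_surjective v f hvf g)
  rw [hsTr, eq_sum_mk_comp_hsPhi v f hvf (Function.invFun (hsPhi B P) g), hinv, map_sum]
  exact (map_sum (QuotientAddGroup.mk' (commSub B)) _ _).symm

end DualBasis

/-! ### Contraction of the first tensor factor -/

section Contraction

variable {k : Type*} [Field k] {A : Type*} [Ring A] [Algebra k A]
  {C : Type*} [Ring C] [Algebra k C]

/-- The contraction `A ⊗ C → C`, `x ⊗ c ↦ u(x) c`, of the first factor against a linear form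
`u` on `A`. -/
noncomputable def contractFst (u : A →ₗ[k] k) : A ⊗[k] C →ₗ[k] C :=
  (TensorProduct.lid k C).toLinearMap ∘ₗ u.rTensor C

@[simp] lemma contractFst_tmul (u : A →ₗ[k] k) (x : A) (c : C) :
    contractFst u (x ⊗ₜ[k] c) = u x • c := by
  simp [contractFst]

lemma contractFst_one_tmul_mul (u : A →ₗ[k] k) (c : C) (x : A ⊗[k] C) :
    contractFst u ((1 : A) ⊗ₜ[k] c * x) = c * contractFst u x := by
  induction x using TensorProduct.induction_on with
  | zero => simp
  | tmul y d => simp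
  | add x y hx hy => rw [mul_add, map_add, hx, hy, map_add, mul_add]

variable {ι : Type*} [Fintype ι] (b : Module.Basis ι k A)

lemma sum_one_tmul_contractFst_mul (x : A ⊗[k] C) :
    ∑ s, ((1 : A) ⊗ₜ[k] contractFst (b.coord s) x) * (b s ⊗ₜ[k] (1 : C)) = x := by
  induction x using TensorProduct.induction_on with
  | zero => simp
  | tmul y c =>
    have hs (s : ι) : ((1 : A) ⊗ₜ[k] contractFst (b.coord s) (y ⊗ₜ[k] c)) * (b s ⊗ₜ[k] (1 : C)) =
        (b.repr y s • b s) ⊗ₜ[k] c := by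
      rw [contractFst_tmul, Algebra.TensorProduct.tmul_mul_tmul, one_mul, mul_one,
        TensorProduct.tmul_smul, TensorProduct.smul_tmul', Module.Basis.coord_apply]
    rw [Finset.sum_congr rfl fun s _ => hs s, ← TensorProduct.sum_tmul, b.sum_repr]
  | add x y hx hy =>
    simp only [map_add, TensorProduct.tmul_add, add_mul, Finset.sum_add_distrib, hx, hy]

/-- The endomorphism `x ↦ a x y` of `A` is nilpotent when `a` is, because left and right
multiplications commute; so its trace vanishes. -/
lemma sum_coord_mul_mul_eq_zero {a : A} (ha : IsNilpotent a) (y : A) :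
    ∑ s, b.coord s (a * b s * y) = 0 := by
  classical
  have := Module.Finite.of_basis b
  have := Module.Free.of_basis b
  have hn : IsNilpotent (LinearMap.mulLeft k a * LinearMap.mulRight k y) :=
    (LinearMap.commute_mulLeft_right a y).isNilpotent_mul_right
      ((LinearMap.isNilpotent_mulLeft_iff k a).2 ha)
  have htr := (LinearMap.isNilpotent_trace_of_isNilpotent hn).eq_zero
  rw [LinearMap.trace_eq_matrix_trace k b, Matrix.trace] at htr
  simpa [LinearMap.toMatrix_apply, mul_assoc] using htr

/-- The `A`-trace of the endomorphism `x ↦ (a ⊗ 1) x r` of `A ⊗ C` vanishes in `C` for nilpotent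
`a`. -/
lemma sum_contractFst_mul_mul_eq_zero {a : A} (ha : IsNilpotent a) (r : A ⊗[k] C) :
    ∑ s, contractFst (b.coord s) ((a * b s) ⊗ₜ[k] (1 : C) * r) = 0 := by
  induction r using TensorProduct.induction_on with
  | zero => simp
  | tmul y c =>
    simp only [Algebra.TensorProduct.tmul_mul_tmul, contractFst_tmul, one_mul,
      ← Finset.sum_smul, sum_coord_mul_mul_eq_zero b ha y, zero_smul]
  | add x y hx hy => simp only [mul_add, map_add, Finset.sum_add_distrib, hx, hy, add_zero]

end Contraction

open TensorProduct in
/-- Let `k` be a field, `A`, `B` finite-dimensional `k`-algebras and `P` a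
finitely generated projective `A`-`B`-bimodule, i.e. a finitely generated projective module
over `A ⊗ₖ Bᵒᵖ`; `P` is a (finitely generated projective) right `B`-module via restriction
along `Bᵒᵖ → A ⊗ₖ Bᵒᵖ`.  For every `a` in the Jacobson radical `J` of `A`, the
Hattori–Stallings trace of the right `B`-module endomorphism `l_a : p ↦ a·p` of `P`
(left multiplication by `a`, i.e. the action of `a ⊗ 1`) vanishes in `B/[B,B]`. -/
theorem hsTr_leftMul_projective_bimodule
    (k : Type*) [Field k] (A : Type*) [Ring A] [Algebra k A] [FiniteDimensional k A]
    (B : Type*) [Ring B] [Algebra k B] [FiniteDimensional k B]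
    (P : Type*) [AddCommGroup P] [Module (A ⊗[k] Bᵐᵒᵖ) P]
    [Module.Finite (A ⊗[k] Bᵐᵒᵖ) P] [Module.Projective (A ⊗[k] Bᵐᵒᵖ) P]
    [Module Bᵐᵒᵖ P]
    (hres : ∀ (b : Bᵐᵒᵖ) (p : P), b • p = (((1 : A) ⊗ₜ[k] b : A ⊗[k] Bᵐᵒᵖ)) • p)
    (a : A) (ha : a ∈ (⊥ : Ideal A).jacobson)
    (la : P →ₗ[Bᵐᵒᵖ] P) (hla : ∀ p : P, la p = ((a ⊗ₜ[k] (1 : Bᵐᵒᵖ) : A ⊗[k] Bᵐᵒᵖ)) • p) :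
    hsTr B P la = 0 := by
  have := IsArtinianRing.of_finite k A
  have hnil : IsNilpotent a := by
    obtain ⟨n, hn⟩ := IsArtinianRing.isNilpotent_jacobson_bot (R := A)
    refine ⟨n, ?_⟩
    have h := Ideal.pow_mem_pow ha n
    rwa [hn] at h
  obtain ⟨n, q, i, -, -, hqi⟩ :=
    Module.Finite.exists_comp_eq_id_of_projective (A ⊗[k] Bᵐᵒᵖ) P
  let b := Module.finBasis k A
  let e : Fin n → (Fin n → A ⊗[k] Bᵐᵒᵖ) := fun j => Pi.single j 1
  let v : Fin n × Fin (Module.finrank k A) → P := fun js =>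
    (b js.2 ⊗ₜ[k] (1 : Bᵐᵒᵖ) : A ⊗[k] Bᵐᵒᵖ) • q (e js.1)
  let f : Fin n × Fin (Module.finrank k A) → (P →ₗ[Bᵐᵒᵖ] B) := fun js =>
    { toFun := fun p => unop (contractFst (b.coord js.2) (i p js.1))
      map_add' := fun x y => by simp
      map_smul' := fun c x => by
        rw [hres, map_smul, Pi.smul_apply, smul_eq_mul, contractFst_one_tmul_mul]
        rfl }
  have hsum (x : Fin n → A ⊗[k] Bᵐᵒᵖ) : ∑ j, x j • q (e j) = q x := by
    conv_rhs => rw [pi_eq_sum_univ' x, map_sum]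
    simp [e, Pi.single]
  have hvf (p : P) : ∑ js, op (f js p) • v js = p := by
    rw [Fintype.sum_prod_type]
    have hj (j : Fin n) : ∑ s, op (f (j, s) p) • v (j, s) = i p j • q (e j) := by
      conv_rhs => rw [← sum_one_tmul_contractFst_mul b (i p j), Finset.sum_smul]
      refine Finset.sum_congr rfl fun s _ => ?_
      rw [hres, mul_smul]
      rfl
    rw [Finset.sum_congr rfl fun j _ => hj j, hsum]
    exact LinearMap.congr_fun hqi p
  have hval (j : Fin n) (s : Fin (Module.finrank k A)) :
      f (j, s) (la (v (j, s))) =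
        unop (contractFst (b.coord s) ((a * b s) ⊗ₜ[k] (1 : Bᵐᵒᵖ) * i (q (e j)) j)) := by
    show unop (contractFst (b.coord s) (i (la (v (j, s))) j)) = _
    rw [hla]
    simp only [v, smul_smul, map_smul, Pi.smul_apply, smul_eq_mul,
      Algebra.TensorProduct.tmul_mul_tmul, mul_one]
  rw [hsTr_eq_mk_sum v f hvf la, Fintype.sum_prod_type]
  simp only [hval, ← Finset.unop_sum, sum_contractFst_mul_mul_eq_zero b hnil, unop_zero,
    Finset.sum_const_zero, QuotientAddGroup.mk_zero]
end
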